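/- Let n ≥ 2 and let k be an integer with 2 ≤ k ≤ n. Then there exists no convex function g : ℝ^n → ℝ satisfying g(x) ≤ Q_k(x) for all x ∈ ℝ^n. -/

import Mathlib

/-!
Every `y` is the average of `n` vectors, the `i`-th of which has `i`-th coordinate
`c + n (y i - c)` and all other coordinates equal to `c`. As `k ≥ 2`, the `k`-th largest coordinate
of each of them is at most `c`, so the convex hull of `{x | Qk k x ≤ c}` is the whole space, for
every real `c`. The sublevel set `{x | g x ≤ c}` of a quasiconvex minorant `g` is convex and
contains this set, hence is the whole space too, so `g` would be at most every real number.
-/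

/-- `Qk k x` is the `k`-th largest coordinate of `x : Fin n → ℝ` (meaningful for `1 ≤ k ≤ n`):
`Tuple.sort x` sorts the coordinates in nondecreasing order, so the `k`-th largest one
sits at (0-indexed) position `n - k`. -/
noncomputable def Qk {n : ℕ} (k : ℕ) (x : Fin n → ℝ) : ℝ :=
  if h : n - k < n then x (Tuple.sort x ⟨n - k, h⟩) else 0

theorem convexHull_iUnion_range_update {𝕜 ι : Type*} {E : ι → Type*} [Field 𝕜] [LinearOrder 𝕜]
    [IsStrictOrderedRing 𝕜] [Finite ι] [Nonempty ι] [DecidableEq ι]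
    [∀ i, AddCommGroup (E i)] [∀ i, Module 𝕜 (E i)] (a : ∀ i, E i) :
    convexHull 𝕜 (⋃ i, Set.range (Function.update a i)) = Set.univ := by
  cases nonempty_fintype ι
  refine Set.eq_univ_of_forall fun y => ?_
  let N : 𝕜 := Fintype.card ι
  have hN : N ≠ 0 := Nat.cast_ne_zero.2 Fintype.card_ne_zero
  let p (i : ι) : ∀ j, E j := Function.update a i (a i + N • (y i - a i))
  have p_eq (i : ι) : p i = a + N • Pi.single i (y i - a i) := by
    ext j
    obtain rfl | hji := eq_or_ne j i
    · simp [p]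
    · simp [p, hji]
  have average_eq : ∑ i, N⁻¹ • p i = y := by
    have sum_single : ∑ i, Pi.single i (y i - a i) = y - a := Finset.univ_sum_single (y - a)
    simp only [p_eq, smul_add, inv_smul_smul₀ hN, Finset.sum_add_distrib, sum_single]
    rw [Finset.sum_const, Finset.card_univ, ← Nat.cast_smul_eq_nsmul 𝕜, smul_inv_smul₀ hN,
      add_sub_cancel]
  rw [← average_eq]
  refine (convex_convexHull 𝕜 _).sum_mem (fun _ _ => by positivity) ?_ fun i _ =>
    subset_convexHull 𝕜 _ (Set.mem_iUnion_of_mem i (Set.mem_range_self _))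
  rw [Finset.sum_const, Finset.card_univ, nsmul_eq_mul, mul_inv_cancel₀ hN]

section

variable {n k : ℕ}

theorem Qk_le_iff_card_lt (hk : 1 ≤ k) (hkn : k ≤ n) {x : Fin n → ℝ} {c : ℝ} :
    Qk k x ≤ c ↔ Finset.card {i | c < x i} < k := by
  have h : n - k < n := by omega
  have card_sorted : Finset.card {i | (x ∘ Tuple.sort x) i ≤ c} = Finset.card {i | x i ≤ c} :=
    Finset.card_equiv (Tuple.sort x) (by simp)
  have card_add_card : Finset.card {i | x i ≤ c} + Finset.card {i | c < x i} = n := by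
    simpa only [not_le, Finset.card_univ, Fintype.card_fin] using
      Finset.card_filter_add_card_filter_not (s := Finset.univ) (fun i => x i ≤ c)
  rw [Qk, dif_pos h, ← Function.comp_apply (f := x),
    ← Tuple.lt_card_le_iff_apply_le_of_monotone (Tuple.monotone_sort x), card_sorted]
  dsimp only
  omega

theorem Qk_update_const_le (hk : 2 ≤ k) (hkn : k ≤ n) (c : ℝ) (i : Fin n) (t : ℝ) :
    Qk k (Function.update (Function.const (Fin n) c) i t) ≤ c := by
  rw [Qk_le_iff_card_lt (by omega) hkn]
  have exceeding_subset :
      ({j | c < Function.update (Function.const (Fin n) c) i t j} : Finset (Fin n)) ⊆ {i} := by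
    intro j hj
    rw [Finset.mem_singleton]
    by_contra hji
    simp [Function.update_of_ne hji] at hj
  calc
    _ ≤ Finset.card {i} := Finset.card_le_card exceeding_subset
    _ = 1 := Finset.card_singleton i
    _ < k := hk

theorem convexHull_setOf_Qk_le (hk : 2 ≤ k) (hkn : k ≤ n) (c : ℝ) :
    convexHull ℝ {x : Fin n → ℝ | Qk k x ≤ c} = Set.univ := by
  have : NeZero n := ⟨by omega⟩
  rw [← Set.univ_subset_iff, ← convexHull_iUnion_range_update (𝕜 := ℝ) (Function.const (Fin n) c)]
  refine convexHull_mono (Set.iUnion_subset fun i => ?_)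
  exact Set.range_subset_iff.2 (Qk_update_const_le hk hkn c i)

theorem no_convex_minorant_on_whole_space_general (hk : 2 ≤ k) (hkn : k ≤ n) :
    ¬ ∃ g : (Fin n → ℝ) → ℝ,
        QuasiconvexOn ℝ (Set.univ : Set (Fin n → ℝ)) g ∧ ∀ x : Fin n → ℝ, g x ≤ Qk k x := by
  rintro ⟨g, hg, hle⟩
  have g_le (c : ℝ) (y : Fin n → ℝ) : g y ≤ c := by
    have hull_subset : convexHull ℝ {x | Qk k x ≤ c} ⊆ {x ∈ Set.univ | g x ≤ c} :=
      convexHull_min (fun x hx => ⟨Set.mem_univ x, (hle x).trans hx⟩) (hg c)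
    rw [convexHull_setOf_Qk_le hk hkn] at hull_subset
    exact (hull_subset (Set.mem_univ y)).2
  exact (sub_one_lt (g 0)).not_ge (g_le (g 0 - 1) 0)

end

theorem no_convex_minorant_on_whole_space (n k : ℕ) (hn : 2 ≤ n) (hk : 2 ≤ k) (hkn : k ≤ n) :
    ¬ ∃ g : (Fin n → ℝ) → ℝ,
        ConvexOn ℝ (Set.univ : Set (Fin n → ℝ)) g ∧ ∀ x : Fin n → ℝ, g x ≤ Qk k x :=
  fun ⟨g, hg, hle⟩ =>
    no_convex_minorant_on_whole_space_general hk hkn ⟨g, hg.quasiconvexOn, hle⟩
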